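/- Suppose k_i = k for all i ∈ [n]. Then the number of x ∈ 𝔽_q^N with w_{(P,w,π)}(x) = n·M_w is (q^k − (q − |D_{M_w}|)^k)^t · q^{k(n−t)}, where t is the number of maximal elements of the poset P. -/

import Mathlib

/-! Bounding every block weight by `M_w` gives `w_{(P,w,π)}(x) ≤ |I_x| · M_w`, with equality iff
all blocks at the maximal elements of `I_x` have weight `M_w`. The value `n · M_w` therefore forces
`I_x` to be the whole poset. Conversely, blocks of weight `M_w` at the maximal elements of `P` are
nonzero, so they already generate the whole poset. Thus the vectors of weight `n · M_w` form a
product: a block at a maximal element must contain a coordinate in `D_{M_w}`, and every other block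
is arbitrary. -/

open scoped Classical

noncomputable section

variable {F : Type*} [Field F] [Fintype F]
variable {ι : Type*} [Fintype ι] [PartialOrder ι]

/-- The block weight induced by `w`: the maximum of the weights of the coordinates. -/
def blockWt (w : F → ℕ) {m : ℕ} (v : Fin m → F) : ℕ :=
  Finset.univ.sup fun t => w (v t)

/-- `M_w`, the maximum weight of an element of `F`. -/
def maxWt (w : F → ℕ) : ℕ := Finset.univ.sup w

/-- `D_r = {α ∈ F : w(α) = r}`. -/
def Dset (w : F → ℕ) (r : ℕ) : Finset F := Finset.univ.filter fun a => w a = r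

/-- `D_r^k = {v ∈ F^k : w̃^k(v) = r}`. -/
def Dk (w : F → ℕ) (m r : ℕ) : Finset (Fin m → F) :=
  Finset.univ.filter fun v => blockWt w v = r

/-- The order ideal (down-set) of the poset generated by a finite set `A`. -/
def genIdeal (A : Finset ι) : Finset ι := Finset.univ.filter fun i => ∃ j ∈ A, i ≤ j

/-- The set of maximal elements of a finite set `I`. -/
def maxElems (I : Finset ι) : Finset ι := I.filter fun i => ∀ j ∈ I, i ≤ j → j = i

/-- `I` is an order ideal (down-set) of the poset. -/
def IsIdeal (I : Finset ι) : Prop := ∀ a b : ι, a ≤ b → b ∈ I → a ∈ I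

/-- The collection `𝓘_j^i` of ideals of cardinality `i` with exactly `j` maximal elements. -/
def idealsWithMax (ι : Type*) [Fintype ι] [PartialOrder ι] (j i : ℕ) : Finset (Finset ι) :=
  Finset.univ.filter fun I => IsIdeal I ∧ I.card = i ∧ (maxElems I).card = j

/-- The π-support of a block vector. -/
def suppPi (k : ι → ℕ) (x : ∀ i, Fin (k i) → F) : Finset ι :=
  Finset.univ.filter fun i => x i ≠ 0

/-- The `(P,w,π)`-weight. -/
def wtP (w : F → ℕ) (k : ι → ℕ) (x : ∀ i, Fin (k i) → F) : ℕ :=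
  ∑ i ∈ maxElems (genIdeal (suppPi k x)), blockWt w (x i)
    + maxWt w * ((genIdeal (suppPi k x)) \ maxElems (genIdeal (suppPi k x))).card

/-- The `(P,w,π)`-distance. -/
def dP (w : F → ℕ) (k : ι → ℕ) (x y : ∀ i, Fin (k i) → F) : ℕ := wtP w k (x - y)

section Block

variable {α : Type*} [Fintype α] {w : α → ℕ} {m : ℕ}

lemma le_maxWt (w : α → ℕ) (a : α) : w a ≤ maxWt w := Finset.le_sup (Finset.mem_univ a)

lemma map_zero_lt_maxWt [Zero α] [Nontrivial α] (hw : ∀ a, w a = 0 ↔ a = 0) :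
    w 0 < maxWt w := by
  obtain ⟨a, ha⟩ := exists_ne (0 : α)
  rw [(hw 0).2 rfl]
  exact (Nat.pos_of_ne_zero ((hw a).not.2 ha)).trans_le (le_maxWt w a)

lemma blockWt_le_maxWt (w : α → ℕ) (v : Fin m → α) : blockWt w v ≤ maxWt w :=
  Finset.sup_le fun t _ => le_maxWt w (v t)

lemma blockWt_eq_maxWt_iff (hw : 0 < maxWt w) (v : Fin m → α) :
    blockWt w v = maxWt w ↔ ∃ t, w (v t) = maxWt w := by
  rw [← (blockWt_le_maxWt w v).ge_iff_eq, blockWt, Finset.le_sup_iff hw]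
  simp only [Finset.mem_univ, true_and, (le_maxWt w _).ge_iff_eq]

lemma ne_zero_of_blockWt_eq_maxWt [Zero α] (hw : w 0 < maxWt w) {v : Fin m → α}
    (hv : blockWt w v = maxWt w) : v ≠ 0 := by
  rintro rfl
  obtain ⟨_, ht⟩ := (blockWt_eq_maxWt_iff hw.pos 0).1 hv
  exact hw.ne ht

lemma Dk_maxWt_eq_compl_piFinset (hw : 0 < maxWt w) (m : ℕ) :
    Dk w m (maxWt w) = (Fintype.piFinset fun _ => (Dset w (maxWt w))ᶜ)ᶜ := by
  ext v
  simp [Dk, Dset, blockWt_eq_maxWt_iff hw]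

lemma card_Dk_maxWt (hw : 0 < maxWt w) (m : ℕ) :
    (Dk w m (maxWt w)).card =
      Fintype.card α ^ m - (Fintype.card α - (Dset w (maxWt w)).card) ^ m := by
  simp [Dk_maxWt_eq_compl_piFinset hw, Finset.card_compl]

end Block

section Ideal

lemma maxElems_subset (I : Finset ι) : maxElems I ⊆ I := Finset.filter_subset _ _

lemma mem_maxElems_univ {i : ι} : i ∈ maxElems (Finset.univ : Finset ι) ↔ IsMax i := by
  simp [maxElems, isMax_iff_forall_not_lt, lt_iff_le_and_ne, eq_comm]

lemma genIdeal_eq_univ_iff {A : Finset ι} :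
    genIdeal A = Finset.univ ↔ maxElems Finset.univ ⊆ A := by
  simp only [Finset.eq_univ_iff_forall, genIdeal, Finset.mem_filter_univ, Finset.subset_iff,
    mem_maxElems_univ]
  constructor
  · intro hA i hi
    obtain ⟨j, hj, hij⟩ := hA i
    rwa [hi.eq_of_le hij]
  · intro hA i
    obtain ⟨j, hij, hj⟩ := Finite.exists_le_maximal (p := fun _ : ι => True) (a := i) trivial
    exact ⟨j, hA (maximal_true.1 hj), hij⟩

lemma card_mul_eq_sum_maxElems_add (I : Finset ι) (r : ℕ) :
    I.card * r = ∑ _i ∈ maxElems I, r + r * (I \ maxElems I).card := by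
  rw [← Finset.card_sdiff_add_card_eq_card (maxElems_subset I), Finset.sum_const, smul_eq_mul]
  ring

end Ideal

section Weight

variable {w : F → ℕ} {k : ι → ℕ}

lemma wtP_le_card_mul_maxWt (w : F → ℕ) (x : ∀ i, Fin (k i) → F) :
    wtP w k x ≤ (genIdeal (suppPi k x)).card * maxWt w := by
  rw [wtP, card_mul_eq_sum_maxElems_add]
  gcongr
  exact blockWt_le_maxWt w _

lemma wtP_eq_card_mul_maxWt_iff (x : ∀ i, Fin (k i) → F) :
    wtP w k x = (genIdeal (suppPi k x)).card * maxWt w ↔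
      ∀ i ∈ maxElems (genIdeal (suppPi k x)), blockWt w (x i) = maxWt w := by
  rw [wtP, card_mul_eq_sum_maxElems_add, add_left_inj,
    Finset.sum_eq_sum_iff_of_le fun i _ => blockWt_le_maxWt w (x i)]

lemma genIdeal_suppPi_eq_univ_of_wtP_eq (hw : 0 < maxWt w) {x : ∀ i, Fin (k i) → F}
    (hx : wtP w k x = Fintype.card ι * maxWt w) : genIdeal (suppPi k x) = Finset.univ := by
  have hle := wtP_le_card_mul_maxWt w x
  rw [hx] at hle
  exact Finset.eq_univ_of_card _ <|
    (Finset.card_le_univ _).antisymm (Nat.le_of_mul_le_mul_right hle hw)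

lemma genIdeal_suppPi_eq_univ_of_blockWt_eq (hw : w 0 < maxWt w) {x : ∀ i, Fin (k i) → F}
    (hx : ∀ i ∈ maxElems (Finset.univ : Finset ι), blockWt w (x i) = maxWt w) :
    genIdeal (suppPi k x) = Finset.univ := by
  refine genIdeal_eq_univ_iff.2 fun i hi => ?_
  simpa only [suppPi, Finset.mem_filter_univ] using ne_zero_of_blockWt_eq_maxWt hw (hx i hi)

lemma wtP_eq_card_univ_mul_maxWt_iff (hw : w 0 < maxWt w) (x : ∀ i, Fin (k i) → F) :
    wtP w k x = Fintype.card ι * maxWt w ↔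
      ∀ i ∈ maxElems (Finset.univ : Finset ι), blockWt w (x i) = maxWt w := by
  have iff_of_eq_univ (hI : genIdeal (suppPi k x) = Finset.univ) :
      wtP w k x = Fintype.card ι * maxWt w ↔
        ∀ i ∈ maxElems (Finset.univ : Finset ι), blockWt w (x i) = maxWt w := by
    simpa only [hI, Finset.card_univ] using wtP_eq_card_mul_maxWt_iff (w := w) x
  exact ⟨fun hx => (iff_of_eq_univ (genIdeal_suppPi_eq_univ_of_wtP_eq hw.pos hx)).1 hx,
    fun hx => (iff_of_eq_univ (genIdeal_suppPi_eq_univ_of_blockWt_eq hw hx)).2 hx⟩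

lemma filter_wtP_eq_piFinset (hw : w 0 < maxWt w) (k : ι → ℕ) :
    (Finset.univ.filter fun x : ∀ i, Fin (k i) → F =>
        wtP w k x = Fintype.card ι * maxWt w) =
      Fintype.piFinset fun i =>
        if i ∈ maxElems Finset.univ then Dk w (k i) (maxWt w) else Finset.univ := by
  ext x
  rw [Finset.mem_filter_univ, wtP_eq_card_univ_mul_maxWt_iff hw, Fintype.mem_piFinset]
  refine forall_congr' fun i => ?_
  split_ifs with hi <;> simp [hi, Dk]

end Weight

theorem stmt5_general (w : F → ℕ) (hw : w 0 < maxWt w) (k : ι → ℕ) :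
    (Finset.univ.filter fun x : ∀ i, Fin (k i) → F =>
        wtP w k x = Fintype.card ι * maxWt w).card =
      (∏ i ∈ maxElems (Finset.univ : Finset ι),
          (Fintype.card F ^ k i - (Fintype.card F - (Dset w (maxWt w)).card) ^ k i)) *
        Fintype.card F ^ ∑ i ∈ (maxElems (Finset.univ : Finset ι))ᶜ, k i := by
  rw [filter_wtP_eq_piFinset hw, Fintype.card_piFinset]
  simp only [apply_ite Finset.card, card_Dk_maxWt hw.pos, Finset.card_univ, Fintype.card_pi_const,
    Finset.prod_ite, Finset.filter_univ_mem, Finset.filter_not, ← Finset.compl_eq_univ_sdiff,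
    Finset.prod_pow_eq_pow_sum]

/-- when all blocks have dimension `k`, the number of vectors of maximal
`(P,w,π)`-weight `n·M_w` is `(q^k - (q - |D_{M_w}|)^k)^t · q^{k(n-t)}`, where `t` is the number
of maximal elements of the poset `P`. -/
theorem stmt5 (w : F → ℕ) (hw0 : ∀ a : F, w a = 0 ↔ a = 0)
    (hwneg : ∀ a : F, w (-a) = w a) (hwadd : ∀ a b : F, w (a + b) ≤ w a + w b)
    (k : ℕ) :
    (Finset.univ.filter fun x : ∀ _ : ι, Fin k → F =>
        wtP w (fun _ => k) x = Fintype.card ι * maxWt w).card =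
      (Fintype.card F ^ k - (Fintype.card F - (Dset w (maxWt w)).card) ^ k) ^
          (maxElems (Finset.univ : Finset ι)).card *
        Fintype.card F ^ (k * (Fintype.card ι - (maxElems (Finset.univ : Finset ι)).card)) := by
  simpa [Finset.card_compl, mul_comm k] using
    stmt5_general w (map_zero_lt_maxWt hw0) fun _ : ι => k
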